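/- Define e(x, ξ) := (2π)^{−1/2} · [ (−ξ² − 3iξ tanh(x) + 3 tanh²(x) − 1) / (−ξ² + 3i|ξ| + 2) ] · e^{ixξ}, and for a Schwartz function f define 𝓕̃f(ξ) := ∫_ℝ conj(e(x, ξ)) f(x) dx. Then the distorted Fourier transform diagonalizes the Schrödinger operator H = −∂ₓ² − 6 sech²(x): for every Schwartz function f : ℝ → ℂ and every ξ ∈ ℝ one has ∫_ℝ conj(e(x, ξ)) ( −f″(x) − 6 sech²(x) f(x) ) dx = ξ² · ∫_ℝ conj(e(x, ξ)) f(x) dx, that is, 𝓕̃(Hf)(ξ) = ξ² 𝓕̃f(ξ). -/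

import Mathlib

/-!
The identity is Green's formula for `H` against the conjugate of the generalized eigenfunction
`e(·, ξ)`. Up to a normalization, `e(x, ξ)` is a polynomial in `tanh x` times the plane wave
`e^{ixξ}`. Since `tanh' = sech² = 1 - tanh²`, differentiation preserves this class of functions and
acts on the polynomial coefficient, so that `H e = ξ² e` becomes an identity of polynomials.
Moreover `tanh` is bounded, hence so are `e` and `∂ₓe`; the Wronskian of `conj e` and `f` and its
derivative `conj e · (H f - ξ² f)` are therefore integrable, and the latter integrates to zero.
-/

open MeasureTheory Real Complex

noncomputable def sech (x : ℝ) : ℝ := (Real.cosh x)⁻¹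

/-- The distorted Fourier basis associated with `H = −∂ₓ² − 6 sech²`. -/
noncomputable def eFun (x ξ : ℝ) : ℂ :=
  ((Real.sqrt (2 * Real.pi) : ℝ) : ℂ)⁻¹ *
    ((-(ξ : ℂ) ^ 2 - 3 * Complex.I * (ξ : ℂ) * ((Real.tanh x : ℝ) : ℂ)
        + 3 * ((Real.tanh x : ℝ) : ℂ) ^ 2 - 1) /
      (-(ξ : ℂ) ^ 2 + 3 * Complex.I * ((|ξ| : ℝ) : ℂ) + 2)) *
    Complex.exp (Complex.I * (x : ℂ) * (ξ : ℂ))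

section Green

variable {𝕜 E : Type*} [NormedField 𝕜] [NormedAlgebra ℝ 𝕜] [NormedAddCommGroup E]
  [NormedSpace ℝ E] [NormedSpace 𝕜 E] [IsScalarTower ℝ 𝕜 E]
  {u u' V : ℝ → 𝕜} {μ : 𝕜} {f f' f'' : ℝ → E}

lemma hasDerivAt_wronskian {x : ℝ} (hu : HasDerivAt u (u' x) x)
    (hu' : HasDerivAt u' ((V x - μ) * u x) x) (hf : HasDerivAt f (f' x) x)
    (hf' : HasDerivAt f' (f'' x) x) :
    HasDerivAt (fun y ↦ u' y • f y - u y • f' y)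
      (u x • (-f'' x + V x • f x) - μ • u x • f x) x := by
  refine ((hu'.fun_smul hf).fun_sub (hu.fun_smul hf')).congr_deriv ?_
  module

theorem integral_smul_schrodinger_eq (hu : ∀ x, HasDerivAt u (u' x) x)
    (hu' : ∀ x, HasDerivAt u' ((V x - μ) * u x) x) (hf : ∀ x, HasDerivAt f (f' x) x)
    (hf' : ∀ x, HasDerivAt f' (f'' x) x)
    (hwronskian : Integrable fun x ↦ u' x • f x - u x • f' x)
    (huf : Integrable fun x ↦ u x • f x)
    (huHf : Integrable fun x ↦ u x • (-f'' x + V x • f x)) :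
    ∫ x, u x • (-f'' x + V x • f x) = μ • ∫ x, u x • f x := by
  have hμuf : Integrable fun x ↦ μ • u x • f x := huf.smul μ
  have hzero : ∫ x, (u x • (-f'' x + V x • f x) - μ • u x • f x) = 0 :=
    integral_eq_zero_of_hasDerivAt_of_integrable
      (fun x ↦ hasDerivAt_wronskian (hu x) (hu' x) (hf x) (hf' x))
      (huHf.sub hμuf) hwronskian
  rwa [integral_sub huHf hμuf, integral_smul, sub_eq_zero] at hzero

end Green

section Hyperbolic

lemma sech_sq (x : ℝ) : sech x ^ 2 = 1 - Real.tanh x ^ 2 := by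
  have hcosh : Real.cosh x ≠ 0 := (Real.cosh_pos x).ne'
  rw [sech, Real.tanh_eq_sinh_div_cosh]
  field_simp
  linarith [Real.cosh_sq x]

lemma abs_sech_le_one (x : ℝ) : |sech x| ≤ 1 := by
  rw [sech, abs_inv, abs_of_pos (Real.cosh_pos x)]
  exact inv_le_one_of_one_le₀ (Real.one_le_cosh x)

lemma continuous_sech : Continuous sech :=
  Real.continuous_cosh.inv₀ fun x ↦ (Real.cosh_pos x).ne'

lemma hasDerivAt_tanh (x : ℝ) : HasDerivAt Real.tanh (sech x ^ 2) x := by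
  have hcosh : Real.cosh x ≠ 0 := (Real.cosh_pos x).ne'
  have htanh : Real.tanh = Real.sinh / Real.cosh := funext Real.tanh_eq_sinh_div_cosh
  rw [htanh]
  refine ((Real.hasDerivAt_sinh x).div (Real.hasDerivAt_cosh x) hcosh).congr_deriv ?_
  rw [sech]
  field_simp
  linarith [Real.cosh_sq x]

lemma integrable_sech_sq_smul {E : Type*} [NormedAddCommGroup E] [NormedSpace ℂ E] {g : ℝ → E}
    (hg : Integrable g) : Integrable fun x ↦ (sech x : ℂ) ^ 2 • g x := by
  refine hg.bdd_smul 1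
    ((Complex.continuous_ofReal.comp continuous_sech).pow 2).aestronglyMeasurable
    (.of_forall fun x ↦ ?_)
  rw [norm_pow, Complex.norm_real]
  exact pow_le_one₀ (norm_nonneg _) (abs_sech_le_one x)

end Hyperbolic

section TanhWave

open Polynomial

/-- The plane wave `e^{ixk}` with the polynomial amplitude `p(tanh x)`. -/
noncomputable def tanhWave (p : ℂ[X]) (k : ℂ) (x : ℝ) : ℂ :=
  p.eval ((Real.tanh x : ℝ) : ℂ) * Complex.exp (Complex.I * x * k)

/-- The amplitude of the derivative of a `tanhWave`: the operator `(1 - t²) d/dt + ik`, which is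
`d/dx` in the variable `t = tanh x` after conjugation by `e^{ixk}`. -/
noncomputable def tanhWaveDeriv (k : ℂ) (p : ℂ[X]) : ℂ[X] :=
  (1 - X ^ 2) * derivative p + C (Complex.I * k) * p

lemma hasDerivAt_tanhWave (p : ℂ[X]) (k : ℂ) (x : ℝ) :
    HasDerivAt (tanhWave p k) (tanhWave (tanhWaveDeriv k p) k x) x := by
  have hamplitude := (p.hasDerivAt ((Real.tanh x : ℝ) : ℂ)).comp x (hasDerivAt_tanh x).ofReal_comp
  have hwave := (((hasDerivAt_id x).ofReal_comp.const_mul Complex.I).mul_const k).cexp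
  refine (hamplitude.fun_mul hwave).congr_deriv ?_
  simp only [sech_sq, tanhWave, tanhWaveDeriv, Function.comp_apply, id_eq, eval_add, eval_mul,
    eval_sub, eval_one, eval_pow, eval_X, eval_C]
  push_cast
  ring

lemma continuous_tanhWave (p : ℂ[X]) (k : ℂ) : Continuous (tanhWave p k) :=
  continuous_iff_continuousAt.2 fun x ↦ (hasDerivAt_tanhWave p k x).continuousAt

lemma exists_norm_tanhWave_le (p : ℂ[X]) (ξ : ℝ) : ∃ M, ∀ x, ‖tanhWave p ξ x‖ ≤ M := by
  obtain ⟨M, hM⟩ :=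
    (isCompact_closedBall (0 : ℂ) 1).exists_bound_of_continuousOn p.continuous.continuousOn
  refine ⟨M, fun x ↦ ?_⟩
  have hwave : ‖Complex.exp (Complex.I * x * ξ)‖ = 1 := by simp [Complex.norm_exp]
  have htanh : ((Real.tanh x : ℝ) : ℂ) ∈ Metric.closedBall (0 : ℂ) 1 := by
    rw [mem_closedBall_zero_iff, Complex.norm_real]
    exact (Real.abs_tanh_lt_one x).le
  rw [tanhWave, norm_mul, hwave, mul_one]
  exact hM _ htanh

lemma integrable_conj_tanhWave_smul {E : Type*} [NormedAddCommGroup E] [NormedSpace ℂ E]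
    (p : ℂ[X]) (ξ : ℝ) {g : ℝ → E} (hg : Integrable g) :
    Integrable fun x ↦ (starRingEnd ℂ) (tanhWave p ξ x) • g x := by
  obtain ⟨M, hM⟩ := exists_norm_tanhWave_le p ξ
  exact hg.bdd_smul M (Complex.continuous_conj.comp (continuous_tanhWave p ξ)).aestronglyMeasurable
    (.of_forall fun x ↦ (RCLike.norm_conj _).trans_le (hM x))

end TanhWave

section Eigenfunction

open Polynomial

/-- The amplitude of `e(·, ξ)`: the polynomial `p` with `e(x, ξ) = p(tanh x) e^{ixξ}`. -/
noncomputable def eFunPoly (ξ : ℝ) : ℂ[X] :=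
  C (((Real.sqrt (2 * Real.pi) : ℝ) : ℂ)⁻¹ *
      (-(ξ : ℂ) ^ 2 + 3 * Complex.I * ((|ξ| : ℝ) : ℂ) + 2)⁻¹) *
    (3 * X ^ 2 - 3 * C (Complex.I * ξ) * X - C ((ξ : ℂ) ^ 2) - 1)

lemma eFun_eq_tanhWave (x ξ : ℝ) : eFun x ξ = tanhWave (eFunPoly ξ) ξ x := by
  simp only [eFun, tanhWave, eFunPoly, eval_mul, eval_sub, eval_one, eval_pow, eval_X, eval_C,
    eval_ofNat]
  ring

lemma tanhWaveDeriv_tanhWaveDeriv_eFunPoly (ξ : ℝ) :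
    tanhWaveDeriv ξ (tanhWaveDeriv ξ (eFunPoly ξ)) =
      (-(6 * (1 - X ^ 2)) - C ((ξ : ℂ) ^ 2)) * eFunPoly ξ := by
  have hsq : C ((ξ : ℂ) ^ 2) = -C (Complex.I * ξ) ^ 2 := by
    rw [← C_pow, ← C_neg, mul_pow, Complex.I_sq, neg_one_mul, neg_neg]
  simp only [tanhWaveDeriv, eFunPoly, hsq, derivative_mul, derivative_add, derivative_sub,
    derivative_neg, derivative_pow, derivative_X, derivative_C, derivative_one, derivative_ofNat,
    derivative_zero, map_natCast, map_ofNat, Nat.cast_ofNat]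
  ring

/-- The derivative `∂ₓ e(x, ξ)`. -/
noncomputable def eFunDeriv (x ξ : ℝ) : ℂ :=
  tanhWave (tanhWaveDeriv ξ (eFunPoly ξ)) ξ x

lemma hasDerivAt_eFun (x ξ : ℝ) : HasDerivAt (eFun · ξ) (eFunDeriv x ξ) x := by
  simp only [eFun_eq_tanhWave]
  exact hasDerivAt_tanhWave (eFunPoly ξ) ξ x

lemma hasDerivAt_eFunDeriv (x ξ : ℝ) :
    HasDerivAt (eFunDeriv · ξ) ((-(6 * (sech x : ℂ) ^ 2) - (ξ : ℂ) ^ 2) * eFun x ξ) x := by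
  refine (hasDerivAt_tanhWave (tanhWaveDeriv ξ (eFunPoly ξ)) ξ x).congr_deriv ?_
  rw [tanhWaveDeriv_tanhWaveDeriv_eFunPoly, eFun_eq_tanhWave, ← Complex.ofReal_pow (sech x),
    sech_sq]
  simp [tanhWave, mul_assoc]

end Eigenfunction

theorem distorted_FT_diagonalizes_H_general {E : Type*} [NormedAddCommGroup E] [NormedSpace ℂ E]
    [CompleteSpace E] {f f' f'' : ℝ → E} (hf : ∀ x, HasDerivAt f (f' x) x)
    (hf' : ∀ x, HasDerivAt f' (f'' x) x) (hf_int : Integrable f) (hf'_int : Integrable f')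
    (hf''_int : Integrable f'') (ξ : ℝ) :
    ∫ x, (starRingEnd ℂ) (eFun x ξ) • (-f'' x - (6 * (sech x : ℂ) ^ 2) • f x) =
      (ξ : ℂ) ^ 2 • ∫ x, (starRingEnd ℂ) (eFun x ξ) • f x := by
  have he (x : ℝ) : HasDerivAt (fun y ↦ (starRingEnd ℂ) (eFun y ξ))
      ((starRingEnd ℂ) (eFunDeriv x ξ)) x := (hasDerivAt_eFun x ξ).star
  have he' (x : ℝ) : HasDerivAt (fun y ↦ (starRingEnd ℂ) (eFunDeriv y ξ))
      ((-(6 * (sech x : ℂ) ^ 2) - (ξ : ℂ) ^ 2) * (starRingEnd ℂ) (eFun x ξ)) x :=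
    (hasDerivAt_eFunDeriv x ξ).star.congr_deriv (by simp)
  have hHf : Integrable fun x ↦ -f'' x + (-(6 * (sech x : ℂ) ^ 2)) • f x := by
    simp only [neg_smul, mul_smul]
    exact hf''_int.neg.add ((integrable_sech_sq_smul hf_int).smul (6 : ℂ)).neg
  have hconj {g : ℝ → E} (hg : Integrable g) :
      Integrable fun x ↦ (starRingEnd ℂ) (eFun x ξ) • g x := by
    simpa only [eFun_eq_tanhWave] using integrable_conj_tanhWave_smul (eFunPoly ξ) ξ hg
  have hgreen := integral_smul_schrodinger_eq he he' hf hf'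
    ((integrable_conj_tanhWave_smul _ ξ hf_int).sub (hconj hf'_int)) (hconj hf_int)
    (hconj hHf)
  simpa only [neg_smul, ← sub_eq_add_neg] using hgreen

theorem distorted_FT_diagonalizes_H (f : SchwartzMap ℝ ℂ) (ξ : ℝ) :
    (∫ x : ℝ, (starRingEnd ℂ) (eFun x ξ) *
        (-(deriv (deriv (⇑f)) x) - 6 * ((sech x : ℝ) : ℂ) ^ 2 * f x)) =
      (ξ : ℂ) ^ 2 * ∫ x : ℝ, (starRingEnd ℂ) (eFun x ξ) * f x :=
  distorted_FT_diagonalizes_H_general f.hasDerivAt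
    (SchwartzMap.derivCLM ℂ ℂ f).hasDerivAt f.integrable (SchwartzMap.derivCLM ℂ ℂ f).integrable
    (SchwartzMap.derivCLM ℂ ℂ (SchwartzMap.derivCLM ℂ ℂ f)).integrable ξ
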